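/- Let γ : ℝ → ℝ² be a smooth closed regular plane curve parametrised by arc length with period L > 0, and let S ∈ ℝ be a constant such that −κ''(s) = 2S ⟨γ'(s), γ(s)⟩ for all s ∈ ℝ (γ is a rotator for the curve diffusion flow). Then γ is a round circle: there exist c ∈ ℝ² and R > 0 with ‖γ(s) − c‖ = R for all s. -/

import Mathlib

open Real MeasureTheory Filter

/-- Euclidean inner product on `ℝ × ℝ`. -/
def innerP (a b : ℝ × ℝ) : ℝ := a.1 * b.1 + a.2 * b.2

/-- Unit normal `ν = (y', -x')` of a plane curve parametrised by arc length. -/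
noncomputable def nuA (γ : ℝ → ℝ × ℝ) (s : ℝ) : ℝ × ℝ :=
  ((deriv γ s).2, -(deriv γ s).1)

/-- Curvature `κ = ⟨γ'', ν⟩` of a plane curve parametrised by arc length. -/
noncomputable def curvA (γ : ℝ → ℝ × ℝ) (s : ℝ) : ℝ :=
  innerP (deriv (deriv γ) s) (nuA γ s)

/-!
Along a rotator the Frenet equations `γ'' = κ ν` and `ν' = -κ γ'` give
`(κ κ' - 2S ⟨γ, ν⟩)' = κ'²`. If the curve is closed, a periodic function is thus monotone, hence
constant, so `κ' = 0`. The constant `κ` is nonzero, as otherwise the periodic function `⟨γ, γ'⟩`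
would have derivative `1`, and so the centre of curvature `γ + ν / κ` is a fixed point at distance
`1 / |κ|` from the curve.
-/

section Periodic

lemma periodic_deriv {𝕜 E : Type*} [NontriviallyNormedField 𝕜] [NormedAddCommGroup E]
    [NormedSpace 𝕜 E] {f : 𝕜 → E} {c : 𝕜} (hf : Function.Periodic f c) :
    Function.Periodic (deriv f) c := fun x ↦ by
  rw [← deriv_comp_add_const, funext hf]

lemma eq_of_monotone_of_periodic {α β : Type*} [AddCommGroup α] [LinearOrder α]
    [IsOrderedAddMonoid α] [Archimedean α] [PartialOrder β] {f : α → β} {c : α}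
    (hmono : Monotone f) (hper : Function.Periodic f c) (hc : 0 < c) (x y : α) : f x = f y := by
  have hle (x y : α) : f x ≤ f y := by
    obtain ⟨z, hz, hyz⟩ := hper.exists_mem_Ico hc y x
    exact (hmono hz.1).trans_eq hyz.symm
  exact (hle x y).antisymm (hle y x)

lemma hasDerivAt_eq_zero_of_periodic_of_nonneg {f f' : ℝ → ℝ} {c : ℝ} (hc : 0 < c)
    (hper : Function.Periodic f c) (hf : ∀ x, HasDerivAt f (f' x) x) (hf' : ∀ x, 0 ≤ f' x)
    (x : ℝ) : f' x = 0 := by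
  have hconst : f = fun _ ↦ f x := funext fun y ↦
    eq_of_monotone_of_periodic (monotone_of_hasDerivAt_nonneg hf hf') hper hc y x
  exact (hf x).unique (hconst ▸ hasDerivAt_const x (f x))

end Periodic

lemma hasDerivAt_innerP {f g : ℝ → ℝ × ℝ} {f' g' : ℝ × ℝ} {s : ℝ} (hf : HasDerivAt f f' s)
    (hg : HasDerivAt g g' s) :
    HasDerivAt (fun t ↦ innerP (f t) (g t)) (innerP f' (g s) + innerP (f s) g') s := by
  have hfst : HasDerivAt (fun t ↦ (f t).1 * (g t).1) (f'.1 * (g s).1 + (f s).1 * g'.1) s :=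
    HasDerivAt.mul hf.fst hg.fst
  have hsnd : HasDerivAt (fun t ↦ (f t).2 * (g t).2) (f'.2 * (g s).2 + (f s).2 * g'.2) s :=
    HasDerivAt.mul hf.snd hg.snd
  refine (hfst.add hsnd).congr_deriv ?_
  simp only [innerP]
  ring

lemma contDiff_curvA {γ : ℝ → ℝ × ℝ} {n : WithTop ℕ∞} (hγ : ContDiff ℝ (n + 2) γ) :
    ContDiff ℝ n (curvA γ) := by
  have hγ' : ContDiff ℝ (n + 1) (deriv γ) := by
    refine (contDiff_succ_iff_deriv.1 ?_).2.2
    rwa [add_assoc, one_add_one_eq_two]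
  have hγ'' : ContDiff ℝ n (deriv (deriv γ)) := (contDiff_succ_iff_deriv.1 hγ').2.2
  have hν : ContDiff ℝ n (nuA γ) :=
    (hγ'.snd.prodMk hγ'.fst.neg).of_le le_self_add
  exact (hγ''.fst.mul hν.fst).add (hγ''.snd.mul hν.snd)

section Closed

variable {γ : ℝ → ℝ × ℝ} {L : ℝ}

lemma periodic_nuA (hper : Function.Periodic γ L) : Function.Periodic (nuA γ) L := fun s ↦ by
  simp only [nuA, periodic_deriv hper s]

lemma periodic_curvA (hper : Function.Periodic γ L) : Function.Periodic (curvA γ) L := fun s ↦ by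
  simp only [curvA, periodic_deriv (periodic_deriv hper) s, periodic_nuA hper s]

end Closed

/-- The evolute of a plane curve parametrised by arc length, i.e. its curve of centres of
curvature `γ + ν / κ`. It is only meaningful where `κ ≠ 0`: elsewhere its value is `γ s`. -/
noncomputable def evolute (γ : ℝ → ℝ × ℝ) (s : ℝ) : ℝ × ℝ :=
  γ s + (curvA γ s)⁻¹ • nuA γ s

section UnitSpeed

variable {γ : ℝ → ℝ × ℝ} {s : ℝ} (hunit : ∀ s, (deriv γ s).1 ^ 2 + (deriv γ s).2 ^ 2 = 1)

include hunit

lemma hasDerivAt_of_unitSpeed (s : ℝ) : HasDerivAt γ (deriv γ s) s := by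
  refine (differentiableAt_of_deriv_ne_zero fun h ↦ ?_).hasDerivAt
  simpa [h] using hunit s

lemma innerP_deriv_deriv_deriv_eq_zero (hγ' : DifferentiableAt ℝ (deriv γ) s) :
    innerP (deriv γ s) (deriv (deriv γ) s) = 0 := by
  have hconst : (fun t ↦ innerP (deriv γ t) (deriv γ t)) = fun _ ↦ 1 := funext fun t ↦ by
    simpa only [innerP, sq] using hunit t
  have h := (hasDerivAt_innerP hγ'.hasDerivAt hγ'.hasDerivAt).unique
    (hconst ▸ hasDerivAt_const s 1)
  simp only [innerP] at h ⊢
  linarith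

lemma hasDerivAt_deriv_of_unitSpeed (hγ' : DifferentiableAt ℝ (deriv γ) s) :
    HasDerivAt (deriv γ) (curvA γ s • nuA γ s) s := by
  refine hγ'.hasDerivAt.congr_deriv ?_
  have horth := innerP_deriv_deriv_deriv_eq_zero hunit hγ'
  simp only [innerP] at horth
  ext
  · simp only [curvA, innerP, nuA, Prod.smul_fst, smul_eq_mul]
    linear_combination -(deriv (deriv γ) s).1 * hunit s + (deriv γ s).1 * horth
  · simp only [curvA, innerP, nuA, Prod.smul_snd, smul_eq_mul]
    linear_combination -(deriv (deriv γ) s).2 * hunit s + (deriv γ s).2 * horth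

lemma hasDerivAt_nuA_of_unitSpeed (hγ' : DifferentiableAt ℝ (deriv γ) s) :
    HasDerivAt (nuA γ) (-curvA γ s • deriv γ s) s := by
  have h := hasDerivAt_deriv_of_unitSpeed hunit hγ'
  refine HasDerivAt.congr_deriv (HasDerivAt.prodMk h.snd (HasDerivAt.neg h.fst)) ?_
  ext <;> simp [nuA]

lemma hasDerivAt_evolute_of_unitSpeed (hγ' : DifferentiableAt ℝ (deriv γ) s)
    (hκ : DifferentiableAt ℝ (curvA γ) s) (hκ₀ : curvA γ s ≠ 0) :
    HasDerivAt (evolute γ) (-(deriv (curvA γ) s / curvA γ s ^ 2) • nuA γ s) s := by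
  refine ((hasDerivAt_of_unitSpeed hunit s).add ((hκ.hasDerivAt.fun_inv hκ₀).smul
    (hasDerivAt_nuA_of_unitSpeed hunit hγ'))).congr_deriv ?_
  have hcancel : (curvA γ s)⁻¹ • -curvA γ s • deriv γ s = -deriv γ s := by
    rw [neg_smul, smul_neg, inv_smul_smul₀ hκ₀]
  rw [hcancel, neg_div]
  abel

lemma sqrt_sq_add_sq_sub_evolute (s : ℝ) :
    √(((γ s).1 - (evolute γ s).1) ^ 2 + ((γ s).2 - (evolute γ s).2) ^ 2) = |curvA γ s|⁻¹ := by
  rw [← abs_inv, ← Real.sqrt_sq_eq_abs]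
  congr 1
  simp only [evolute, nuA, Prod.fst_add, Prod.snd_add, Prod.smul_fst, Prod.smul_snd, smul_eq_mul]
  linear_combination (curvA γ s)⁻¹ ^ 2 * hunit s

lemma exists_curvA_ne_zero_of_periodic (hγ' : Differentiable ℝ (deriv γ)) {L : ℝ} (hL : 0 < L)
    (hper : Function.Periodic γ L) : ∃ s, curvA γ s ≠ 0 := by
  by_contra! hκ
  have hderiv (t : ℝ) : HasDerivAt (fun t ↦ innerP (γ t) (deriv γ t)) 1 t := by
    refine (hasDerivAt_innerP (hasDerivAt_of_unitSpeed hunit t)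
      (hasDerivAt_deriv_of_unitSpeed hunit (hγ' t))).congr_deriv ?_
    simp only [hκ t, innerP, zero_smul, Prod.fst_zero, Prod.snd_zero]
    linear_combination hunit t
  have hper' : Function.Periodic (fun t ↦ innerP (γ t) (deriv γ t)) L := fun t ↦ by
    simp only [hper t, periodic_deriv hper t]
  exact one_ne_zero <|
    hasDerivAt_eq_zero_of_periodic_of_nonneg hL hper' hderiv (fun _ ↦ zero_le_one) 0

lemma hasDerivAt_curvA_mul_deriv_sub_innerP_nuA_of_rotator
    (hγ' : DifferentiableAt ℝ (deriv γ) s)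
    (hκ : DifferentiableAt ℝ (curvA γ) s) (hκ' : DifferentiableAt ℝ (deriv (curvA γ)) s) {S : ℝ}
    (hrot : -(deriv (deriv (curvA γ)) s) = 2 * S * innerP (deriv γ s) (γ s)) :
    HasDerivAt (fun t ↦ curvA γ t * deriv (curvA γ) t - 2 * S * innerP (γ t) (nuA γ t))
      (deriv (curvA γ) s ^ 2) s := by
  refine ((hκ.hasDerivAt.mul hκ'.hasDerivAt).sub ((hasDerivAt_innerP
    (hasDerivAt_of_unitSpeed hunit s)
    (hasDerivAt_nuA_of_unitSpeed hunit hγ')).const_mul (2 * S))).congr_deriv ?_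
  simp only [innerP, nuA, Prod.smul_fst, Prod.smul_snd, smul_eq_mul] at hrot ⊢
  linear_combination -curvA γ s * hrot

lemma deriv_curvA_eq_zero_of_periodic_of_rotator (hγ' : Differentiable ℝ (deriv γ))
    (hκ : Differentiable ℝ (curvA γ)) (hκ' : Differentiable ℝ (deriv (curvA γ))) {L : ℝ}
    (hL : 0 < L) (hper : Function.Periodic γ L) {S : ℝ}
    (hrot : ∀ s, -(deriv (deriv (curvA γ)) s) = 2 * S * innerP (deriv γ s) (γ s)) (s : ℝ) :
    deriv (curvA γ) s = 0 := by
  have hperκ := periodic_curvA hper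
  have hperF : Function.Periodic
      (fun t ↦ curvA γ t * deriv (curvA γ) t - 2 * S * innerP (γ t) (nuA γ t)) L := fun t ↦ by
    simp only [hperκ t, periodic_deriv hperκ t, hper t, periodic_nuA hper t]
  have hsq := hasDerivAt_eq_zero_of_periodic_of_nonneg hL hperF
    (fun t ↦ hasDerivAt_curvA_mul_deriv_sub_innerP_nuA_of_rotator hunit
      (hγ' t) (hκ t) (hκ' t) (hrot t))
    (fun t ↦ sq_nonneg _) s
  exact sq_eq_zero_iff.1 hsq

lemma exists_circle_of_deriv_curvA_eq_zero (hγ' : Differentiable ℝ (deriv γ))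
    (hκ : Differentiable ℝ (curvA γ)) (hκ'₀ : ∀ s, deriv (curvA γ) s = 0)
    (hκ₀ : ∃ s, curvA γ s ≠ 0) :
    ∃ c : ℝ × ℝ, ∃ R : ℝ, 0 < R ∧ ∀ s, √(((γ s).1 - c.1) ^ 2 + ((γ s).2 - c.2) ^ 2) = R := by
  obtain ⟨s₀, hs₀⟩ := hκ₀
  have hκ_const (s : ℝ) : curvA γ s = curvA γ s₀ := is_const_of_deriv_eq_zero hκ hκ'₀ s s₀
  have hevolute (s : ℝ) : HasDerivAt (evolute γ) 0 s := by
    simpa [hκ'₀ s] using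
      hasDerivAt_evolute_of_unitSpeed hunit (hγ' s) (hκ s) (hκ_const s ▸ hs₀)
  have hevolute_const (s : ℝ) : evolute γ s = evolute γ s₀ :=
    is_const_of_deriv_eq_zero (fun t ↦ (hevolute t).differentiableAt)
      (fun t ↦ (hevolute t).deriv) s s₀
  refine ⟨evolute γ s₀, |curvA γ s₀|⁻¹, by positivity, fun s ↦ ?_⟩
  rw [← hevolute_const s, sqrt_sq_add_sq_sub_evolute hunit, hκ_const s]

end UnitSpeed

theorem closed_rotator_is_circle_general
    (γ : ℝ → ℝ × ℝ) (L : ℝ) (hL : 0 < L)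
    (hγ' : Differentiable ℝ (deriv γ)) (hκ : Differentiable ℝ (curvA γ))
    (hκ' : Differentiable ℝ (deriv (curvA γ)))
    (hunit : ∀ s, (deriv γ s).1 ^ 2 + (deriv γ s).2 ^ 2 = 1)
    (hper : ∀ s, γ (s + L) = γ s)
    (S : ℝ)
    (hrot : ∀ s, -(deriv (deriv (curvA γ)) s) = 2 * S * innerP (deriv γ s) (γ s)) :
    ∃ c : ℝ × ℝ, ∃ R : ℝ, 0 < R ∧
      ∀ s, Real.sqrt (((γ s).1 - c.1) ^ 2 + ((γ s).2 - c.2) ^ 2) = R := by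
  have hκ'₀ := deriv_curvA_eq_zero_of_periodic_of_rotator hunit hγ' hκ hκ' hL hper hrot
  have hκ₀ := exists_curvA_ne_zero_of_periodic hunit hγ' hL hper
  exact exists_circle_of_deriv_curvA_eq_zero hunit hγ' hκ hκ'₀ hκ₀

/-- a smooth closed rotator for the curve diffusion flow
(`−κ'' = 2S ⟨γ', γ⟩`) is a round circle. -/
theorem closed_rotator_is_circle
    (γ : ℝ → ℝ × ℝ) (L : ℝ) (hL : 0 < L)
    (hsmooth : ContDiff ℝ (⊤ : ℕ∞) γ)
    (hunit : ∀ s, (deriv γ s).1 ^ 2 + (deriv γ s).2 ^ 2 = 1)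
    (hper : ∀ s, γ (s + L) = γ s)
    (S : ℝ)
    (hrot : ∀ s, -(deriv (deriv (curvA γ)) s) = 2 * S * innerP (deriv γ s) (γ s)) :
    ∃ c : ℝ × ℝ, ∃ R : ℝ, 0 < R ∧
      ∀ s, Real.sqrt (((γ s).1 - c.1) ^ 2 + ((γ s).2 - c.2) ^ 2) = R := by
  have hκ : ContDiff ℝ 2 (curvA γ) := contDiff_curvA (contDiff_infty.1 hsmooth 4)
  exact closed_rotator_is_circle_general γ L hL
    (contDiff_infty.1 hsmooth 2).differentiable_deriv_two (hκ.differentiable two_ne_zero)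
    hκ.differentiable_deriv_two hunit hper S hrot
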